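/- Suppose K ⊆ L are origin-symmetric star bodies in R^n and ε > 0 satisfies ε = min_{ξ ∈ S^{n-1}} (|L∩ξ^⊥| - |K∩ξ^⊥|) and |L|^{(n-1)/n} - |K|^{(n-1)/n} < c_{n,1}·ε. Then the function g_0 = χ_{L\K} satisfies ∫_L g_0 < (n/(n-1)) · c_{n,1} · |L|^{1/n} · min_{ξ ∈ S^{n-1}} ∫_{L∩ξ^⊥} g_0. -/

import Mathlib

open MeasureTheory Metric

noncomputable section

/-- Volume of the unit Euclidean ball in `ℝ^m`. -/
def unitBallVol (m : ℕ) : ℝ :=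
  (volume (ball (0 : EuclideanSpace ℝ (Fin m)) 1)).toReal

/-- The constant `c_{n,k} = |B_2^n|^{(n-k)/n} / |B_2^{n-k}|`. -/
def cnk (n k : ℕ) : ℝ :=
  unitBallVol n ^ (((n : ℝ) - k) / n) / unitBallVol (n - k)

/- For `0 < p ≤ 1` the map `x ↦ x ^ p` is concave, so `|L| ^ p - |K| ^ p` dominates its
linearization `p * |L| ^ (p - 1) * (|L| - |K|)` at `|L|`. With `p = (n - 1) / n` the volume
hypothesis thus bounds `|L \ K|` in terms of `ε`, which by additivity on each hyperplane is the
volume of the smallest section of `L \ K`. -/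

theorem mul_rpow_sub_one_mul_sub_le_rpow_sub_rpow {p x y : ℝ} (hp₀ : 0 ≤ p) (hp₁ : p ≤ 1)
    (hx : 0 < x) (hy : 0 ≤ y) : p * x ^ (p - 1) * (x - y) ≤ x ^ p - y ^ p := by
  have bernoulli : (y / x) ^ p ≤ 1 + p * (y / x - 1) := by
    simpa only [add_sub_cancel] using
      rpow_one_add_le_one_add_mul_self (s := y / x - 1) (by linarith [div_nonneg hy hx.le]) hp₀ hp₁
  have scaled : y ^ p ≤ (1 + p * (y / x - 1)) * x ^ p := by
    rwa [Real.div_rpow hy hx.le, div_le_iff₀ (Real.rpow_pos_of_pos hx p)] at bernoulli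
  calc
    p * x ^ (p - 1) * (x - y) = x ^ p - (1 + p * (y / x - 1)) * x ^ p := by
      rw [Real.rpow_sub_one hx.ne']
      field_simp
      ring
    _ ≤ x ^ p - y ^ p := sub_le_sub_left scaled _

theorem measureReal_sdiff_lt_of_rpow_sub_rpow_lt {α : Type*} [MeasurableSpace α] {μ : Measure α}
    {K L : Set α} (hKL : K ⊆ L) (hK : MeasurableSet K) (hL₀ : μ L ≠ 0) (hL : μ L ≠ ⊤)
    {p b : ℝ} (hp₀ : 0 < p) (hp₁ : p ≤ 1) (h : μ.real L ^ p - μ.real K ^ p < b) :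
    μ.real (L \ K) < p⁻¹ * b * μ.real L ^ (1 - p) := by
  have hLpos : 0 < μ.real L := ENNReal.toReal_pos hL₀ hL
  have hpow : μ.real L ^ (p - 1) * μ.real L ^ (1 - p) = 1 := by
    rw [← Real.rpow_add hLpos, sub_add_sub_cancel', sub_self, Real.rpow_zero]
  have tangent : p * μ.real L ^ (p - 1) * μ.real (L \ K) < b := by
    rw [measureReal_sdiff hKL hK hL]
    exact (mul_rpow_sub_one_mul_sub_le_rpow_sub_rpow hp₀.le hp₁ hLpos measureReal_nonneg).trans_lt h
  calc
    μ.real (L \ K) = p⁻¹ * (p * μ.real L ^ (p - 1) * μ.real (L \ K)) * μ.real L ^ (1 - p) := by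
      field_simp
      linear_combination -μ.real (L \ K) * hpow
    _ < p⁻¹ * b * μ.real L ^ (1 - p) := by gcongr

section SectionVolume

variable {E : Type*} [NormedAddCommGroup E] [InnerProductSpace ℝ E] [FiniteDimensional ℝ E]
  [MeasurableSpace E] [BorelSpace E]

/-- The volume `|A ∩ H|` of the section of `A` by a subspace `H`, in the dimension of `H`. It is `0`
when that volume is infinite. -/
def sectionVol (H : Submodule ℝ E) (A : Set E) : ℝ :=
  volume.real ((↑) ⁻¹' A : Set H)

theorem sectionVol_sdiff (H : Submodule ℝ E) {K L : Set E} (hKL : K ⊆ L) (hK : MeasurableSet K)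
    (hL : Bornology.IsBounded L) :
    sectionVol H (L \ K) = sectionVol H L - sectionVol H K := by
  have hLH : Bornology.IsBounded ((↑) ⁻¹' L : Set H) :=
    (isometry_subtype_coe (s := (H : Set E))).antilipschitz.isBounded_preimage hL
  exact measureReal_sdiff (Set.preimage_mono hKL) (measurable_subtype_coe hK)
    hLH.measure_lt_top.ne

theorem minimal_sections_general {K L : Set E} (hdim : 2 ≤ Module.finrank ℝ E) (hKL : K ⊆ L)
    (hK : MeasurableSet K) (hL : Bornology.IsBounded L) (hL₀ : volume L ≠ 0) {c ε : ℝ}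
    (hmin : IsLeast {d : ℝ | ∃ ξ : E, ‖ξ‖ = 1 ∧
        d = sectionVol (ℝ ∙ ξ)ᗮ L - sectionVol (ℝ ∙ ξ)ᗮ K} ε)
    (hvol : volume.real L ^ (((Module.finrank ℝ E : ℝ) - 1) / Module.finrank ℝ E)
        - volume.real K ^ (((Module.finrank ℝ E : ℝ) - 1) / Module.finrank ℝ E) < c * ε) :
    volume.real (L \ K)
      < ((Module.finrank ℝ E : ℝ) / ((Module.finrank ℝ E : ℝ) - 1)) * c
          * volume.real L ^ ((1 : ℝ) / Module.finrank ℝ E)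
          * sInf {d : ℝ | ∃ ξ : E, ‖ξ‖ = 1 ∧ d = sectionVol (ℝ ∙ ξ)ᗮ (L \ K)} := by
  simp only [sectionVol_sdiff _ hKL hK hL, hmin.csInf_eq]
  set n : ℝ := (Module.finrank ℝ E : ℝ)
  have hn : 2 ≤ n := Nat.ofNat_le_cast.2 hdim
  have hexp₀ : 0 < (n - 1) / n := div_pos (by linarith) (by linarith)
  have hexp₁ : (n - 1) / n ≤ 1 := div_le_one_of_le₀ (by linarith) (by linarith)
  have hexp : 1 - (n - 1) / n = 1 / n := by
    field_simp
    ring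
  calc
    volume.real (L \ K) < ((n - 1) / n)⁻¹ * (c * ε) * volume.real L ^ (1 - (n - 1) / n) :=
      measureReal_sdiff_lt_of_rpow_sub_rpow_lt hKL hK hL₀ hL.measure_lt_top.ne hexp₀ hexp₁ hvol
    _ = n / (n - 1) * c * volume.real L ^ (1 / n) * ε := by
      rw [inv_div, hexp]
      ring

end SectionVolume

/-- Minimal sections counterexample: if `K ⊆ L` are origin-symmetric star bodies,
`ε = min_ξ (|L∩ξ^⊥| - |K∩ξ^⊥|)` and `|L|^{(n-1)/n} - |K|^{(n-1)/n} < c_{n,1}ε`, then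
`g_0 = χ_{L\K}` satisfies `∫_L g_0 < (n/(n-1)) c_{n,1} |L|^{1/n} min_ξ ∫_{L∩ξ^⊥} g_0`. -/
theorem minimal_sections (n : ℕ) (hn : 2 ≤ n)
    (K L : Set (EuclideanSpace ℝ (Fin n))) (hKL : K ⊆ L)
    (hKcomp : IsCompact K) (hLcomp : IsCompact L)
    (hKsymm : ∀ x ∈ K, -x ∈ K) (hLsymm : ∀ x ∈ L, -x ∈ L)
    (hKstar : ∀ x ∈ K, ∀ t ∈ Set.Icc (0 : ℝ) 1, t • x ∈ K)
    (hLstar : ∀ x ∈ L, ∀ t ∈ Set.Icc (0 : ℝ) 1, t • x ∈ L)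
    (hK0 : (0 : EuclideanSpace ℝ (Fin n)) ∈ interior K)
    (hL0 : (0 : EuclideanSpace ℝ (Fin n)) ∈ interior L)
    (ε : ℝ) (hε : 0 < ε)
    (hmin : IsLeast {d : ℝ | ∃ ξ : EuclideanSpace ℝ (Fin n), ‖ξ‖ = 1 ∧
        d = (volume ((↑) ⁻¹' L : Set (ℝ ∙ ξ)ᗮ)).toReal
              - (volume ((↑) ⁻¹' K : Set (ℝ ∙ ξ)ᗮ)).toReal} ε)
    (hvol : (volume L).toReal ^ (((n : ℝ) - 1) / n)
        - (volume K).toReal ^ (((n : ℝ) - 1) / n) < cnk n 1 * ε) :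
    (volume (L \ K)).toReal
      < ((n : ℝ) / ((n : ℝ) - 1)) * cnk n 1 * (volume L).toReal ^ ((1 : ℝ) / n)
          * sInf {d : ℝ | ∃ ξ : EuclideanSpace ℝ (Fin n), ‖ξ‖ = 1 ∧
              d = (volume ((↑) ⁻¹' (L \ K) : Set (ℝ ∙ ξ)ᗮ)).toReal} := by
  simpa only [finrank_euclideanSpace_fin, sectionVol, Measure.real] using minimal_sections_general
    (K := K) (L := L) (c := cnk n 1) (ε := ε) (by simpa only [finrank_euclideanSpace_fin])
    hKL hKcomp.measurableSet hLcomp.isBounded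
    (Measure.measure_pos_of_mem_nhds _ (mem_interior_iff_mem_nhds.1 hL0)).ne'
    hmin (by simpa only [finrank_euclideanSpace_fin])
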